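/- Let S ⊆ ℤ² be a nonempty subset connected with respect to grid adjacency, let v ∈ ℤ² be a nonzero vector, let n ≥ 1 be an integer, and let p ∈ ℤ² satisfy p ∈ S and p + n·v ∈ S. Then S intersects its translate by v, i.e., S ∩ (S + v) ≠ ∅. -/

import Mathlib

/-- Grid adjacency on ℤ²: two points are adjacent iff their ℓ¹-distance is 1. -/
def GridAdj (p q : ℤ × ℤ) : Prop := |p.1 - q.1| + |p.2 - q.2| = 1

/-- A subset of ℤ² is grid-connected if any two of its points are joined by a
path of adjacent points staying inside the set. -/
def GridConnected (S : Set (ℤ × ℤ)) : Prop :=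
  ∀ p ∈ S, ∀ q ∈ S,
    Relation.ReflTransGen (fun a b => GridAdj a b ∧ a ∈ S ∧ b ∈ S) p q

/-- Translate of a subset of ℤ² by a vector. -/
def setTranslate (S : Set (ℤ × ℤ)) (v : ℤ × ℤ) : Set (ℤ × ℤ) := (· + v) '' S

open Filter Set

/-!
Suppose `S` misses `S + v`. After a symmetry `v` points to the right. Replace `S` by a finite
connected subset `T` containing `p` and `p + n • v`, and prolong `T` by a vertical ray upwards from
a point maximizing `v.1 * y - v.2 * x` and by one downwards from a point minimizing it. As this
functional is invariant under translation by `v`, the resulting set `L` still misses `L + v`.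
Now `L` separates the plane, so the part of the plane to the right of `L + (k + 1) • v` lies to the
right of `L + k • v`. Hence `L + n • v` lies to the right of `L`, although both contain `p + n • v`.
-/

/-- `p` and `q` are joined by a grid path inside `S`. As `Relation.ReflTransGen` is reflexive, every
point is reachable from itself, also outside `S`. -/
def GridReachable (S : Set (ℤ × ℤ)) (p q : ℤ × ℤ) : Prop :=
  Relation.ReflTransGen (fun a b => GridAdj a b ∧ a ∈ S ∧ b ∈ S) p q

section GridReachable

variable {S T : Set (ℤ × ℤ)} {p q r : ℤ × ℤ} {f : ℤ × ℤ → ℤ × ℤ}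

theorem GridAdj.symm (h : GridAdj p q) : GridAdj q p := by
  rwa [GridAdj, abs_sub_comm q.1, abs_sub_comm q.2]

theorem gridAdj_iff : GridAdj p q ↔ q = (p.1 + 1, p.2) ∨ p = (q.1 + 1, q.2) ∨
    q = (p.1, p.2 + 1) ∨ p = (q.1, q.2 + 1) := by
  simp only [GridAdj, Prod.ext_iff]
  grind

theorem GridAdj.add_right (h : GridAdj p q) (v : ℤ × ℤ) : GridAdj (p + v) (q + v) := by
  simpa [GridAdj] using h

theorem GridAdj.swap (h : GridAdj p q) : GridAdj p.swap q.swap := by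
  simpa [GridAdj, add_comm] using h

namespace GridReachable

theorem refl (S : Set (ℤ × ℤ)) (p : ℤ × ℤ) : GridReachable S p p :=
  Relation.ReflTransGen.refl

theorem single (h : GridAdj p q) (hp : p ∈ S) (hq : q ∈ S) : GridReachable S p q :=
  Relation.ReflTransGen.single ⟨h, hp, hq⟩

theorem trans (hpq : GridReachable S p q) (hqr : GridReachable S q r) : GridReachable S p r :=
  Relation.ReflTransGen.trans hpq hqr

theorem symm (h : GridReachable S p q) : GridReachable S q p := by
  induction h with
  | refl => exact .refl S p
  | tail _ hbc ih => exact (single hbc.1.symm hbc.2.2 hbc.2.1).trans ih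

theorem map (hf : ∀ a b, GridAdj a b → GridAdj (f a) (f b)) (hST : MapsTo f S T)
    (h : GridReachable S p q) : GridReachable T (f p) (f q) :=
  Relation.ReflTransGen.lift f (fun a b ⟨hadj, ha, hb⟩ => ⟨hf a b hadj, hST ha, hST hb⟩) p q h

theorem mono (hST : S ⊆ T) (h : GridReachable S p q) : GridReachable T p q :=
  h.map (f := id) (fun _ _ => id) hST

theorem mem (h : GridReachable S p q) (hp : p ∈ S) : q ∈ S := by
  induction h with
  | refl => exact hp
  | tail _ hbc => exact hbc.2.2

theorem of_forall_mem (hT : ∀ r, GridReachable S p r → r ∈ T) (h : GridReachable S p q) :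
    GridReachable T p q := by
  induction h with
  | refl => exact .refl T p
  | tail hpb hbc ih => exact ih.trans (.single hbc.1 (hT _ hpb) (hT _ (hpb.tail hbc)))

theorem apply_eq {β : Type*} {g : ℤ × ℤ → β}
    (hg : ∀ a b, GridAdj a b → a ∈ S → b ∈ S → g a = g b) (h : GridReachable S p q) :
    g p = g q := by
  induction h with
  | refl => rfl
  | tail _ hbc ih => exact ih.trans (hg _ _ hbc.1 hbc.2.1 hbc.2.2)

end GridReachable

theorem gridReachable_row {x x' y : ℤ} (hx : x ≤ x') (hS : ∀ t, x ≤ t → t ≤ x' → (t, y) ∈ S) :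
    GridReachable S (x, y) (x', y) := by
  induction x', hx using Int.leInduction with
  | base => exact .refl S _
  | succ t ht ih =>
    refine (ih fun u hu hut => hS u hu (by omega)).trans (.single ?_ (hS t ht (by omega)) ?_)
    · exact gridAdj_iff.2 (.inl rfl)
    · exact hS (t + 1) (by omega) le_rfl

theorem gridReachable_column {x y y' : ℤ} (hy : y ≤ y') (hS : ∀ t, y ≤ t → t ≤ y' → (x, t) ∈ S) :
    GridReachable S (x, y) (x, y') :=
  (gridReachable_row (S := Prod.swap ⁻¹' S) (y := x) hy hS).map (fun _ _ => GridAdj.swap)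
    (mapsTo_preimage _ _)

end GridReachable

section GridConnected

variable {S : Set (ℤ × ℤ)} {p q : ℤ × ℤ}

theorem gridConnected_of_forall_reachable (h : ∀ q ∈ S, GridReachable S p q) : GridConnected S :=
  fun a ha b hb => (h a ha).symm.trans (h b hb)

theorem GridConnected.image {f : ℤ × ℤ → ℤ × ℤ} (hS : GridConnected S)
    (hf : ∀ a b, GridAdj a b → GridAdj (f a) (f b)) : GridConnected (f '' S) := by
  rintro _ ⟨a, ha, rfl⟩ _ ⟨b, hb, rfl⟩
  exact GridReachable.map hf (mapsTo_image f S) (hS a ha b hb)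

theorem GridConnected.insert (hS : GridConnected S) (hp : p ∈ S) (h : GridAdj p q) :
    GridConnected (insert q S) := by
  refine gridConnected_of_forall_reachable (p := p) ?_
  rintro r (rfl | hr)
  · exact .single h (mem_insert_of_mem _ hp) (mem_insert _ _)
  · exact GridReachable.mono (subset_insert q S) (hS p hp r hr)

theorem GridReachable.exists_finite_gridConnected (h : GridReachable S p q) (hp : p ∈ S) :
    ∃ T ⊆ S, T.Finite ∧ GridConnected T ∧ p ∈ T ∧ q ∈ T := by
  induction h with
  | refl =>
    refine ⟨{p}, singleton_subset_iff.2 hp, finite_singleton p, ?_, rfl, rfl⟩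
    exact gridConnected_of_forall_reachable (p := p) (by rintro _ rfl; exact .refl _ _)
  | @tail b c _ hbc ih =>
    obtain ⟨T, hTS, hfin, hT, hpT, hbT⟩ := ih
    exact ⟨insert c T, insert_subset hbc.2.2 hTS, hfin.insert c, hT.insert hbT hbc.1,
      mem_insert_of_mem c hpT, mem_insert c T⟩

end GridConnected

section SetTranslate

variable {S : Set (ℤ × ℤ)} {p q v w : ℤ × ℤ}

theorem mem_setTranslate : q ∈ setTranslate S v ↔ q - v ∈ S := by
  simp [setTranslate, sub_eq_add_neg]

theorem setTranslate_zero (S : Set (ℤ × ℤ)) : setTranslate S 0 = S := by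
  simp [setTranslate]

theorem setTranslate_setTranslate : setTranslate (setTranslate S v) w = setTranslate S (v + w) := by
  simp only [setTranslate, image_image, add_assoc]

theorem disjoint_setTranslate (h : Disjoint S (setTranslate S v)) (w : ℤ × ℤ) :
    Disjoint (setTranslate S w) (setTranslate S (v + w)) := by
  rw [← setTranslate_setTranslate]
  exact disjoint_image_of_injective (add_left_injective w) h

theorem inter_setTranslate_neg_nonempty :
    (S ∩ setTranslate S (-v)).Nonempty ↔ (S ∩ setTranslate S v).Nonempty := by
  simp only [Set.Nonempty, mem_inter_iff, mem_setTranslate, sub_neg_eq_add]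
  exact ⟨fun ⟨q, hq, hqv⟩ => ⟨q + v, hqv, by simpa using hq⟩,
    fun ⟨q, hq, hqv⟩ => ⟨q - v, hqv, by simpa using hq⟩⟩

theorem swap_image_setTranslate :
    Prod.swap '' setTranslate S v = setTranslate (Prod.swap '' S) v.swap := by
  simp only [setTranslate, image_image, Prod.swap_add]

theorem GridConnected.translate (hS : GridConnected S) (v : ℤ × ℤ) :
    GridConnected (setTranslate S v) :=
  hS.image fun _ _ h => h.add_right v

theorem GridReachable.sub_of_compl_setTranslate (h : GridReachable (setTranslate S v)ᶜ p q) :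
    GridReachable Sᶜ (p - v) (q - v) := by
  refine h.map (f := (· - v)) (fun a b hab => ?_) fun r hr => mt mem_setTranslate.2 hr
  simpa only [sub_eq_add_neg] using hab.add_right (-v)

end SetTranslate

/-- A discrete analogue of a properly embedded line: a connected set which high up is the column
`x = a`, and whose complement does not connect the two sides of that column. -/
structure IsVerticalSeparator (L : Set (ℤ × ℤ)) (a : ℤ) : Prop where
  connected : GridConnected L
  mem_iff : ∀ᶠ y in atTop, ∀ x, (x, y) ∈ L ↔ x = a
  not_reachable : ∀ᶠ y in atTop, ∀ x₁ < a, ∀ x₂ > a, ¬ GridReachable Lᶜ (x₁, y) (x₂, y)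

/-- The part of the plane to the right of a vertical separator: the component of its complement
which contains all points far up and far to the right, that is, all large points for the product
order on `ℤ × ℤ`. -/
def rightSide (L : Set (ℤ × ℤ)) : Set (ℤ × ℤ) :=
  {q | ∀ᶠ z in atTop, GridReachable Lᶜ z q}

theorem eventually_lt_fst_and_snd {P : ℤ → Prop} (hP : ∀ᶠ y in atTop, P y) (a : ℤ) :
    ∀ᶠ z : ℤ × ℤ in atTop, a < z.1 ∧ P z.2 := by
  rw [← prod_atTop_atTop_eq]
  exact (eventually_gt_atTop a).prod_mk hP

namespace IsVerticalSeparator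

variable {L L' : Set (ℤ × ℤ)} {a a' : ℤ}

theorem disjoint_rightSide (hL : IsVerticalSeparator L a) : Disjoint L (rightSide L) := by
  refine disjoint_right.2 fun q hq => ?_
  obtain ⟨z, hzq, haz, hz⟩ := (hq.and (eventually_lt_fst_and_snd hL.mem_iff a)).exists
  exact hzq.mem fun hzL => haz.ne' ((hz z.1).1 hzL)

theorem subset_rightSide (hL : IsVerticalSeparator L a) (hL' : IsVerticalSeparator L' a')
    (haa' : a < a') (hd : Disjoint L L') : L' ⊆ rightSide L := by
  intro q hq
  filter_upwards [eventually_lt_fst_and_snd (hL.mem_iff.and hL'.mem_iff) a']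
  rintro ⟨x, y⟩ ⟨hx, hy, hy'⟩
  have hrow : GridReachable Lᶜ (a', y) (x, y) :=
    gridReachable_row (le_of_lt hx) fun t ht _ htL => (haa'.trans_le ht).ne' ((hy t).1 htL)
  have hline : GridReachable L' (a', y) q := hL'.connected _ ((hy' a').2 rfl) q hq
  exact hrow.symm.trans (hline.mono hd.subset_compl_left)

theorem eventually_not_reachable (hL : IsVerticalSeparator L a) (hL' : IsVerticalSeparator L' a')
    (haa' : a < a') (hd : Disjoint L L') :
    ∀ᶠ z in atTop, ∀ q ∈ L, ¬ GridReachable L'ᶜ z q := by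
  filter_upwards [eventually_lt_fst_and_snd (hL.mem_iff.and hL'.not_reachable) a']
  rintro ⟨x, y⟩ ⟨hx, hy, hy'⟩ q hq hzq
  have hline : GridReachable L (a, y) q := hL.connected _ ((hy a).2 rfl) q hq
  exact hy' a haa' x hx ((hline.mono hd.subset_compl_right).trans hzq.symm)

theorem rightSide_subset (hL : IsVerticalSeparator L a) (hL' : IsVerticalSeparator L' a')
    (haa' : a < a') (hd : Disjoint L L') : rightSide L' ⊆ rightSide L := by
  intro q hq
  filter_upwards [hq, hL.eventually_not_reachable hL' haa' hd] with z hzq hz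
  exact hzq.of_forall_mem fun r hzr hr => hz r hr hzr

theorem disjoint_of_chain {L : ℕ → Set (ℤ × ℤ)} {a : ℕ → ℤ}
    (hL : ∀ k, IsVerticalSeparator (L k) (a k)) (ha : StrictMono a)
    (hd : ∀ k, Disjoint (L k) (L (k + 1))) (n : ℕ) : Disjoint (L 0) (L (n + 1)) := by
  have hanti : Antitone fun k => rightSide (L k) := antitone_nat_of_succ_le fun k =>
    (hL k).rightSide_subset (hL (k + 1)) (ha k.lt_succ_self) (hd k)
  have hright : L (n + 1) ⊆ rightSide (L n) :=
    (hL n).subset_rightSide (hL (n + 1)) (ha n.lt_succ_self) (hd n)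
  exact (hL 0).disjoint_rightSide.mono_right (hright.trans (hanti n.zero_le))

theorem translate (hL : IsVerticalSeparator L a) (v : ℤ × ℤ) :
    IsVerticalSeparator (setTranslate L v) (a + v.1) where
  connected := hL.connected.translate v
  mem_iff := by
    filter_upwards [(tendsto_atTop_add_const_right atTop (-v.2) tendsto_id).eventually hL.mem_iff]
      with y hy x
    rw [mem_setTranslate, ← sub_eq_iff_eq_add]
    exact hy (x - v.1)
  not_reachable := by
    filter_upwards
      [(tendsto_atTop_add_const_right atTop (-v.2) tendsto_id).eventually hL.not_reachable]
      with y hy x hx x' hx' h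
    exact hy (x - v.1) (by omega) (x' - v.1) (by omega) h.sub_of_compl_setTranslate

theorem disjoint_setTranslate_nsmul (hL : IsVerticalSeparator L a) {v : ℤ × ℤ} (hv : 0 < v.1)
    (hd : Disjoint L (setTranslate L v)) {n : ℕ} (hn : n ≠ 0) :
    Disjoint L (setTranslate L (n • v)) := by
  obtain ⟨m, rfl⟩ := Nat.exists_eq_succ_of_ne_zero hn
  have hmono : StrictMono fun k : ℕ => a + (k • v).1 := strictMono_nat_of_lt_succ fun k => by
    simp [hv]
  have hsucc (k : ℕ) : Disjoint (setTranslate L (k • v)) (setTranslate L ((k + 1) • v)) := by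
    simpa only [succ_nsmul'] using disjoint_setTranslate hd (k • v)
  simpa only [zero_nsmul, setTranslate_zero] using
    disjoint_of_chain (fun k => hL.translate (k • v)) hmono hsucc m

end IsVerticalSeparator

/-- The set `T` together with the vertical rays going up from `a` and down from `b`. The rays are
open: their endpoints are only included if they belong to `T`. -/
def verticalExtension (T : Set (ℤ × ℤ)) (a b : ℤ × ℤ) : Set (ℤ × ℤ) :=
  {q | q ∈ T ∨ (q.1 = a.1 ∧ a.2 < q.2) ∨ (q.1 = b.1 ∧ q.2 < b.2)}

/-- `s (x, y)` behaves off `S` like the signed number of crossings of the half-line going left from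
`(x, y + 1/2)` with a path that comes down from infinity to `a`, runs inside `S` from `a` to `b`,
and goes down to infinity from `b`; downward crossings count positively. -/
structure IsCrossingCount (S : Set (ℤ × ℤ)) (a b : ℤ × ℤ) (s : ℤ × ℤ → ℤ) : Prop where
  up : ∀ x y, (x, y + 1) ∉ S → s (x, y + 1) = s (x, y)
  right : ∀ x y, (x, y) ∉ S → s (x + 1, y) = s (x, y) +
    (if x = a.1 ∧ a.2 < y then 1 else 0) + (if x = b.1 ∧ y < b.2 then 1 else 0)
  above : ∀ x y, (∀ q ∈ S, q.2 < y) → s (x, y) = if a.1 < x then 1 else 0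

section CrossingCount

variable {S : Set (ℤ × ℤ)} {a b c : ℤ × ℤ} {s : ℤ × ℤ → ℤ}

theorem isCrossingCount_column (ha : a ∈ S) :
    IsCrossingCount S a a fun q => if a.1 < q.1 then 1 else 0 where
  up _ _ _ := rfl
  right x y hxy := by
    have : ¬ (x = a.1 ∧ y = a.2) := by rintro ⟨rfl, rfl⟩; exact hxy ha
    grind
  above _ _ _ := rfl

-- Moving the lower ray from `b` to `c` only affects the points between the two rays.
theorem IsCrossingCount.tail (hs : IsCrossingCount S a b s) (hbc : GridAdj b c) (hb : b ∈ S)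
    (hc : c ∈ S) : IsCrossingCount S a c fun q => s q +
      if q.2 < b.2 then (if c.1 < q.1 then 1 else 0) - (if b.1 < q.1 then 1 else 0) else 0 := by
  have hne {x y : ℤ} (hxy : (x, y) ∉ S) : ¬ (x = b.1 ∧ y = b.2) ∧ ¬ (x = c.1 ∧ y = c.2) :=
    ⟨by rintro ⟨rfl, rfl⟩; exact hxy hb, by rintro ⟨rfl, rfl⟩; exact hxy hc⟩
  simp only [gridAdj_iff, Prod.ext_iff] at hbc
  constructor
  · intro x y hxy
    have := hs.up x y hxy
    have := hne hxy
    grind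
  · intro x y hxy
    have := hs.right x y hxy
    have := hne hxy
    grind
  · intro x y hy
    have := hy b hb
    simp [hs.above x y hy, this.not_gt]

theorem GridReachable.exists_isCrossingCount (h : GridReachable S a b) (ha : a ∈ S) :
    ∃ s, IsCrossingCount S a b s := by
  induction h with
  | refl => exact ⟨_, isCrossingCount_column ha⟩
  | tail _ hbc ih =>
    obtain ⟨s, hs⟩ := ih
    exact ⟨_, hs.tail hbc.1 hbc.2.1 hbc.2.2⟩

theorem IsCrossingCount.eq_of_gridAdj (hs : IsCrossingCount S a b s) {p q : ℤ × ℤ}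
    (hpq : GridAdj p q) (hp : p ∉ verticalExtension S a b) (hq : q ∉ verticalExtension S a b) :
    s p = s q := by
  have right_eq {r : ℤ × ℤ} (hr : r ∉ verticalExtension S a b) : s (r.1 + 1, r.2) = s r := by
    obtain ⟨hrS, hup, hdown⟩ := by simpa only [verticalExtension, mem_ofPred_eq, not_or] using hr
    simpa [hup, hdown] using hs.right r.1 r.2 hrS
  have up_eq {r : ℤ × ℤ} (hr : (r.1, r.2 + 1) ∉ verticalExtension S a b) :
      s (r.1, r.2 + 1) = s r := hs.up r.1 r.2 fun h => hr (.inl h)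
  rcases gridAdj_iff.1 hpq with rfl | rfl | rfl | rfl
  · exact (right_eq hp).symm
  · exact right_eq hq
  · exact (up_eq hq).symm
  · exact up_eq hp

end CrossingCount

section VerticalExtension

variable {T : Set (ℤ × ℤ)} {a b : ℤ × ℤ}

theorem subset_verticalExtension : T ⊆ verticalExtension T a b := fun _ => .inl

theorem gridConnected_verticalExtension (hT : GridConnected T) (ha : a ∈ T) (hb : b ∈ T) :
    GridConnected (verticalExtension T a b) := by
  have reachable_of_mem {q} (hq : q ∈ T) : GridReachable (verticalExtension T a b) a q :=
    GridReachable.mono subset_verticalExtension (hT a ha q hq)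
  refine gridConnected_of_forall_reachable (p := a) ?_
  rintro ⟨x, y⟩ (hq | ⟨rfl, hy⟩ | ⟨rfl, hy⟩)
  · exact reachable_of_mem hq
  · refine gridReachable_column (le_of_lt hy) fun t ht _ => ?_
    rcases ht.eq_or_lt with rfl | ht
    · exact .inl ha
    · exact .inr (.inl ⟨rfl, ht⟩)
  · refine (reachable_of_mem hb).trans (gridReachable_column (le_of_lt hy) fun t _ ht => ?_).symm
    rcases ht.eq_or_lt with rfl | ht
    · exact .inl hb
    · exact .inr (.inr ⟨rfl, ht⟩)

theorem isVerticalSeparator_verticalExtension (hfin : T.Finite) (hT : GridConnected T)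
    (ha : a ∈ T) (hb : b ∈ T) : IsVerticalSeparator (verticalExtension T a b) a.1 := by
  have habove : ∀ᶠ y in atTop, ∀ q ∈ T, q.2 < y :=
    (eventually_all_finite hfin).2 fun q _ => eventually_gt_atTop q.2
  refine ⟨gridConnected_verticalExtension hT ha hb, ?_, ?_⟩
  · filter_upwards [habove] with y hy x
    refine ⟨?_, fun hx => .inr (.inl ⟨hx, hy a ha⟩)⟩
    rintro (h | h | h)
    · exact absurd (hy _ h) (lt_irrefl y)
    · exact h.1
    · exact absurd h.2 (hy b hb).not_gt
  · obtain ⟨s, hs⟩ := GridReachable.exists_isCrossingCount (hT a ha b hb) ha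
    filter_upwards [habove] with y hy x hx x' hx' h
    have hside : s (x, y) = s (x', y) := h.apply_eq fun _ _ => hs.eq_of_gridAdj
    rw [hs.above x y hy, hs.above x' y hy, if_neg hx.not_gt, if_pos hx'] at hside
    exact zero_ne_one hside

-- The functional is constant on `v`-chords and lies outside its range on `T` along the two rays, so
-- a `v`-chord of the extension has both ends in `T` or both ends on the same vertical ray.
theorem disjoint_verticalExtension_setTranslate {v : ℤ × ℤ} (hv : 0 < v.1) (hb : b ∈ T)
    (hd : Disjoint T (setTranslate T v))
    (hmax : ∀ q ∈ T, v.1 * q.2 - v.2 * q.1 ≤ v.1 * a.2 - v.2 * a.1)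
    (hmin : ∀ q ∈ T, v.1 * b.2 - v.2 * b.1 ≤ v.1 * q.2 - v.2 * q.1) :
    Disjoint (verticalExtension T a b) (setTranslate (verticalExtension T a b) v) := by
  have above_max {q : ℤ × ℤ} (hq : q.1 = a.1 ∧ a.2 < q.2) :
      v.1 * a.2 - v.2 * a.1 < v.1 * q.2 - v.2 * q.1 := by
    rw [hq.1]
    gcongr
    exact hq.2
  have below_min {q : ℤ × ℤ} (hq : q.1 = b.1 ∧ q.2 < b.2) :
      v.1 * q.2 - v.2 * q.1 < v.1 * b.2 - v.2 * b.1 := by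
    rw [hq.1]
    gcongr
    exact hq.2
  refine disjoint_left.2 fun q hq hqv => ?_
  have invariant : v.1 * (q - v).2 - v.2 * (q - v).1 = v.1 * q.2 - v.2 * q.1 := by
    simp only [Prod.fst_sub, Prod.snd_sub]
    ring
  have fst_sub : (q - v).1 = q.1 - v.1 := rfl
  rcases hq with hq | hq | hq <;> rcases mem_setTranslate.1 hqv with hr | hr | hr
  · exact disjoint_left.1 hd hq (mem_setTranslate.2 hr)
  · linarith [hmax q hq, above_max hr]
  · linarith [hmin q hq, below_min hr]
  · linarith [above_max hq, hmax _ hr]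
  · omega
  · linarith [above_max hq, below_min hr, hmax b hb]
  · linarith [below_min hq, hmin _ hr]
  · linarith [below_min hq, above_max hr, hmax b hb]
  · omega

end VerticalExtension

section Chord

variable {S T : Set (ℤ × ℤ)} {p v : ℤ × ℤ} {n : ℕ}

theorem disjoint_setTranslate_nsmul_of_finite (hfin : T.Finite) (hT : GridConnected T)
    (hv : 0 < v.1) (hd : Disjoint T (setTranslate T v)) (hn : n ≠ 0) :
    Disjoint T (setTranslate T (n • v)) := by
  rcases T.eq_empty_or_nonempty with rfl | hne
  · exact empty_disjoint _
  let φ : ℤ × ℤ → ℤ := fun q => v.1 * q.2 - v.2 * q.1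
  obtain ⟨a, ha, hmax⟩ := exists_max_image T φ hfin hne
  obtain ⟨b, hb, hmin⟩ := exists_min_image T φ hfin hne
  have hdisj := (isVerticalSeparator_verticalExtension hfin hT ha hb).disjoint_setTranslate_nsmul hv
    (disjoint_verticalExtension_setTranslate hv hb hd hmax hmin) hn
  exact hdisj.mono subset_verticalExtension (image_mono subset_verticalExtension)

theorem GridConnected.inter_setTranslate_nonempty_of_fst_pos (hS : GridConnected S) (hv : 0 < v.1)
    (hn : n ≠ 0) (hp : p ∈ S) (hpn : p + n • v ∈ S) : (S ∩ setTranslate S v).Nonempty := by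
  obtain ⟨T, hTS, hfin, hT, hpT, hpnT⟩ :=
    GridReachable.exists_finite_gridConnected (hS p hp _ hpn) hp
  rw [← not_disjoint_iff_nonempty_inter]
  intro hd
  have hdT : Disjoint T (setTranslate T v) := hd.mono hTS (image_mono hTS)
  exact disjoint_left.1 (disjoint_setTranslate_nsmul_of_finite hfin hT hv hdT hn) hpnT
    (mem_image_of_mem _ hpT)

theorem GridConnected.inter_setTranslate_nonempty_of_fst_ne_zero (hS : GridConnected S)
    (hv : v.1 ≠ 0) (hn : n ≠ 0) (hp : p ∈ S) (hpn : p + n • v ∈ S) :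
    (S ∩ setTranslate S v).Nonempty := by
  rcases hv.lt_or_gt with hneg | hpos
  · have hback : p + n • v + n • (-v) ∈ S := by simpa using hp
    exact inter_setTranslate_neg_nonempty.1
      (hS.inter_setTranslate_nonempty_of_fst_pos (neg_pos.2 hneg) hn hpn hback)
  · exact hS.inter_setTranslate_nonempty_of_fst_pos hpos hn hp hpn

end Chord

/-- If a nonempty grid-connected set `S` contains both `p` and `p + n • v` for a
nonzero vector `v` and an integer `n ≥ 1`, then `S` intersects `S + v`. -/
theorem connected_set_intersects_translate (S : Set (ℤ × ℤ))
    (hne : S.Nonempty) (hconn : GridConnected S)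
    (v : ℤ × ℤ) (hv : v ≠ 0) (n : ℕ) (hn : 1 ≤ n)
    (p : ℤ × ℤ) (hp : p ∈ S) (hpn : p + n • v ∈ S) :
    (S ∩ setTranslate S v).Nonempty := by
  have hn0 : n ≠ 0 := Nat.one_le_iff_ne_zero.1 hn
  by_cases hv1 : v.1 = 0
  · have hv2 : v.swap.1 ≠ 0 := fun hv2 => hv (Prod.ext hv1 hv2)
    have hswap : GridConnected (Prod.swap '' S) := hconn.image fun _ _ => GridAdj.swap
    have hpn' : p.swap + n • v.swap ∈ Prod.swap '' S := ⟨p + n • v, hpn, rfl⟩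
    have hmeet := hswap.inter_setTranslate_nonempty_of_fst_ne_zero hv2 hn0
      (mem_image_of_mem _ hp) hpn'
    rw [← swap_image_setTranslate, ← image_inter Prod.swap_injective] at hmeet
    exact hmeet.of_image
  · exact hconn.inter_setTranslate_nonempty_of_fst_ne_zero hv1 hn0 hp hpn
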